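/- There is an absolute constant c > 0 with the following property: for every finite hypergraph H = (V,E) on n vertices with VC-dimension d ≥ 1 and every ε with 2/n < ε ≤ 1/2, there exist a positive integer k with k ≥ c·n²·ε⁴/(d·log₂(1/ε)) and a coloring of all 2-element subsets of V with k colors such that every hyperedge e ∈ E with |e| ≥ εn contains, for each of the k colors, a 2-element subset of that color. -/

import Mathlib

/-- `A` is shattered by the hyperedge family `E`. -/
def Shatters {V : Type*} [DecidableEq V] (E : Finset (Finset V)) (A : Finset V) : Prop :=
  ∀ B ⊆ A, ∃ e ∈ E, A ∩ e = B

/-- The hypergraph with hyperedge family `E` has VC-dimension exactly `d`. -/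
def IsVCDim {V : Type*} [DecidableEq V] (E : Finset (Finset V)) (d : ℕ) : Prop :=
  (∃ A : Finset V, Shatters E A ∧ A.card = d) ∧
  ∀ A : Finset V, Shatters E A → A.card ≤ d

/-!
Call a set of pairs a pair net if every hyperedge with at least `εn` vertices contains one of its
members. Pairwise disjoint pair nets give the colors, and they are picked greedily: as long as at
most `(εn)²/6` pairs have been used, every large hyperedge still contains a fraction at least
`ε²/3` of the unused pairs, so the `ε`-net theorem yields a further net of size `s` of order
`d log(1/ε) / ε²` among them. Hence there are about `(εn)²/(6s)` colors.

The `ε`-net theorem is proved by double sampling. For `s` pairs of sample points, sum over the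
traces `B` on the sampled points the weight which is `0` if `B` contains a first point and `2 ^ t`
if it contains `t` second points and no first one. If every `s`-tuple of points missed some set of
density `δ`, the mean weight would be at least `(1 + δ) ^ s`. Randomly swapping the points of each
pair does not change the set of traces and averages the weight of a single trace to at most `1`, so
the mean weight is at most the number of traces, which the Sauer–Shelah lemma bounds.
-/

section Trace

open Finset

variable {V : Type*} [DecidableEq V]

theorem IsVCDim.vcDim_eq {E : Finset (Finset V)} {d : ℕ} (h : IsVCDim E d) : E.vcDim = d := by
  obtain ⟨⟨A, hA, rfl⟩, hmax⟩ := h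
  exact le_antisymm (Finset.sup_le fun B hB => hmax B (mem_shatterer.1 hB))
    (Finset.Shatters.card_le_vcDim hA)

theorem vcDim_image_inter_le (E : Finset (Finset V)) (U : Finset V) :
    (E.image (· ∩ U)).vcDim ≤ E.vcDim := by
  refine Finset.sup_le fun A hA => Finset.Shatters.card_le_vcDim fun B hB => ?_
  rw [mem_shatterer] at hA
  obtain ⟨_, hT, hAT⟩ := hA.exists_superset
  obtain ⟨f, -, rfl⟩ := mem_image.1 hT
  have hAU : A ⊆ U := hAT.trans inter_subset_right
  obtain ⟨_, hT', rfl⟩ := hA hB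
  obtain ⟨e, he, rfl⟩ := mem_image.1 hT'
  exact ⟨e, he, by rw [inter_left_comm, inter_eq_left.2 hAU, inter_comm]⟩

theorem pow_vcDim_mul_card_le {𝒜 : Finset (Finset V)} {U : Finset V} (h𝒜 : ∀ A ∈ 𝒜, A ⊆ U)
    {l : ℝ} (hl₀ : 0 ≤ l) (hl₁ : l ≤ 1) : l ^ 𝒜.vcDim * #𝒜 ≤ (1 + l) ^ #U := by
  have hsub : 𝒜.shatterer ⊆ U.powerset := fun A hA => by
    obtain ⟨B, hB, hAB⟩ := (mem_shatterer.1 hA).exists_superset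
    exact mem_powerset.2 (hAB.trans (h𝒜 B hB))
  calc l ^ 𝒜.vcDim * #𝒜 ≤ l ^ 𝒜.vcDim * #𝒜.shatterer := by
        gcongr ?_ * ?_
        exact mod_cast card_le_card_shatterer 𝒜
    _ = ∑ _A ∈ 𝒜.shatterer, l ^ 𝒜.vcDim := by rw [sum_const, nsmul_eq_mul, mul_comm]
    _ ≤ ∑ A ∈ 𝒜.shatterer, l ^ #A := sum_le_sum fun A hA =>
        pow_le_pow_of_le_one hl₀ hl₁ (mem_shatterer.1 hA).card_le_vcDim
    _ ≤ ∑ A ∈ U.powerset, l ^ #A :=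
        sum_le_sum_of_subset_of_nonneg hsub fun _ _ _ => pow_nonneg hl₀ _
    _ = (1 + l) ^ #U := by simpa [add_comm] using sum_pow_mul_eq_add_pow l 1 U

theorem card_image_inter_le_of_vcDim_le {E : Finset (Finset V)} {d : ℕ} (hE : E.vcDim ≤ d)
    {l : ℝ} (hl₀ : 0 < l) (hl₁ : l ≤ 1) (U : Finset V) :
    (#(E.image (· ∩ U)) : ℝ) ≤ l⁻¹ ^ d * (1 + l) ^ #U := by
  rw [inv_pow, ← div_eq_inv_mul, le_div_iff₀' (pow_pos hl₀ d)]
  calc l ^ d * (#(E.image (· ∩ U)) : ℝ)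
      ≤ l ^ (E.image (· ∩ U)).vcDim * (#(E.image (· ∩ U)) : ℝ) := by
        gcongr ?_ * _
        exact pow_le_pow_of_le_one hl₀.le hl₁ ((vcDim_image_inter_le E U).trans hE)
    _ ≤ (1 + l) ^ #U :=
        pow_vcDim_mul_card_le (forall_mem_image.2 fun _ _ => inter_subset_right) hl₀.le hl₁

end Trace

section DoubleSampling

open Finset

variable {β : Type*} [DecidableEq β] {s : ℕ}

/-- The factor contributed by a pair of sample points to the double-sampling weight of `A`: the
product over a sample vanishes unless `A` misses all first points, and then it is `2 ^ t`, where `t`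
counts the second points lying in `A`. -/
def missWeight (A : Finset β) (q : β × β) : ℝ :=
  if q.1 ∈ A then 0 else if q.2 ∈ A then 2 else 1

theorem missWeight_nonneg (A : Finset β) (q : β × β) : 0 ≤ missWeight A q := by
  unfold missWeight; split_ifs <;> norm_num

theorem missWeight_add_missWeight_swap_le (A : Finset β) (q : β × β) :
    missWeight A q + missWeight A q.swap ≤ 2 := by
  by_cases h₁ : q.1 ∈ A <;> by_cases h₂ : q.2 ∈ A <;> norm_num [missWeight, h₁, h₂]

theorem missWeight_inter {A S : Finset β} {q : β × β} (h₁ : q.1 ∈ S) (h₂ : q.2 ∈ S) :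
    missWeight (A ∩ S) q = missWeight A q := by
  simp [missWeight, h₁, h₂]

theorem sum_prod_missWeight_of_forall_notMem [Fintype β] {A : Finset β} {x : Fin s → β}
    (hx : ∀ i, x i ∉ A) :
    ∑ y : Fin s → β, ∏ i, missWeight A (x i, y i) = ((Fintype.card β : ℝ) + #A) ^ s := by
  have hsum (i : Fin s) : ∑ b, missWeight A (x i, b) = (Fintype.card β : ℝ) + #A := by
    have hterm (b : β) : missWeight A (x i, b) = 1 + if b ∈ A then 1 else 0 := by
      rw [missWeight, if_neg (hx i)]; split_ifs <;> norm_num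
    simp [hterm, sum_add_distrib]
  rw [← Fintype.prod_sum fun i b => missWeight A (x i, b)]
  simp [hsum]

/-- The permutation of the double samples that exchanges the two points of the `i`-th pair for
those `i` with `σ i = true`. -/
def swapSample (σ : Fin s → Bool) : Equiv.Perm (Fin s → β × β) :=
  Equiv.piCongrRight fun i => if σ i then Equiv.prodComm β β else Equiv.refl _

theorem sum_prod_missWeight_swapSample_le (A : Finset β) (z : Fin s → β × β) :
    ∑ σ : Fin s → Bool, ∏ i, missWeight A (swapSample σ z i) ≤ 2 ^ s := by
  calc ∑ σ : Fin s → Bool, ∏ i, missWeight A (swapSample σ z i)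
      = ∏ i, ∑ c : Bool, missWeight A (if c then (z i).swap else z i) := by
        rw [Fintype.prod_sum]
        refine sum_congr rfl fun σ _ => prod_congr rfl fun i _ => ?_
        cases h : σ i <;> simp [swapSample, h]
    _ ≤ ∏ _i : Fin s, 2 := by
        gcongr with i
        · exact fun i _ => sum_nonneg fun c _ => missWeight_nonneg A _
        · simpa [add_comm] using missWeight_add_missWeight_swap_le A (z i)
    _ = 2 ^ s := by simp

/-- The set of all points, first and second, that occur in a double sample. -/
def samplePoints (z : Fin s → β × β) : Finset β :=
  univ.biUnion fun i => {(z i).1, (z i).2}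

theorem fst_mem_samplePoints (z : Fin s → β × β) (i : Fin s) : (z i).1 ∈ samplePoints z :=
  mem_biUnion.2 ⟨i, mem_univ i, mem_insert_self _ _⟩

theorem snd_mem_samplePoints (z : Fin s → β × β) (i : Fin s) : (z i).2 ∈ samplePoints z :=
  mem_biUnion.2 ⟨i, mem_univ i, mem_insert_of_mem (mem_singleton_self _)⟩

theorem card_samplePoints_le (z : Fin s → β × β) : #(samplePoints z) ≤ 2 * s :=
  (card_biUnion_le_card_mul _ _ 2 fun _ _ => card_le_two).trans_eq (by simp [mul_comm])

theorem samplePoints_swapSample (σ : Fin s → Bool) (z : Fin s → β × β) :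
    samplePoints (swapSample σ z) = samplePoints z := by
  refine biUnion_congr rfl fun i _ => ?_
  cases h : σ i <;> simp [swapSample, h, pair_comm]

/-- The double-sampling weight of a set family: the sum over its traces on the sampled points,
each trace counted once, of the product of the factors `missWeight`. -/
def traceWeight (𝒜 : Finset (Finset β)) (z : Fin s → β × β) : ℝ :=
  ∑ B ∈ 𝒜.image (· ∩ samplePoints z), ∏ i, missWeight B (z i)

theorem prod_missWeight_le_traceWeight {𝒜 : Finset (Finset β)} {A : Finset β} (hA : A ∈ 𝒜)
    (z : Fin s → β × β) : ∏ i, missWeight A (z i) ≤ traceWeight 𝒜 z := by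
  calc ∏ i, missWeight A (z i) = ∏ i, missWeight (A ∩ samplePoints z) (z i) :=
        prod_congr rfl fun i _ =>
          (missWeight_inter (fst_mem_samplePoints z i) (snd_mem_samplePoints z i)).symm
    _ ≤ traceWeight 𝒜 z :=
        single_le_sum (f := fun B => ∏ i, missWeight B (z i))
          (fun B _ => prod_nonneg fun i _ => missWeight_nonneg B _) (mem_image_of_mem _ hA)

theorem sum_traceWeight_swapSample_le (𝒜 : Finset (Finset β)) (z : Fin s → β × β) :
    ∑ σ, traceWeight 𝒜 (swapSample σ z) ≤ 2 ^ s * #(𝒜.image (· ∩ samplePoints z)) := by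
  simp only [traceWeight, samplePoints_swapSample]
  rw [sum_comm, mul_comm, ← nsmul_eq_mul]
  exact sum_le_card_nsmul _ _ _ fun B _ => sum_prod_missWeight_swapSample_le B z

theorem sum_traceWeight_le [Fintype β] {𝒜 : Finset (Finset β)} {T : ℝ}
    (hT : ∀ S : Finset β, #S ≤ 2 * s → (#(𝒜.image (· ∩ S)) : ℝ) ≤ T) :
    ∑ z : Fin s → β × β, traceWeight 𝒜 z ≤ (Fintype.card β : ℝ) ^ (2 * s) * T := by
  refine le_of_mul_le_mul_left ?_ (pow_pos (zero_lt_two' ℝ) s)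
  calc 2 ^ s * ∑ z : Fin s → β × β, traceWeight 𝒜 z
      = ∑ σ : Fin s → Bool, ∑ z, traceWeight 𝒜 (swapSample σ z) := by
        simp [Equiv.sum_comp (swapSample _) (traceWeight 𝒜)]
    _ = ∑ z, ∑ σ : Fin s → Bool, traceWeight 𝒜 (swapSample σ z) := sum_comm
    _ ≤ ∑ _z : Fin s → β × β, 2 ^ s * T := by
        gcongr with z
        refine (sum_traceWeight_swapSample_le 𝒜 z).trans ?_
        gcongr
        exact hT _ (card_samplePoints_le z)
    _ = 2 ^ s * ((Fintype.card β : ℝ) ^ (2 * s) * T) := by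
        simp only [sum_const, card_univ, Fintype.card_fun, Fintype.card_prod, Fintype.card_fin,
          nsmul_eq_mul]
        push_cast
        ring

theorem le_sum_traceWeight [Fintype β] {𝒜 : Finset (Finset β)} {δ : ℝ} (hδ : 0 ≤ δ)
    (hlarge : ∀ A ∈ 𝒜, δ * Fintype.card β ≤ #A) (hmiss : ∀ x : Fin s → β, ∃ A ∈ 𝒜, ∀ i, x i ∉ A) :
    (Fintype.card β : ℝ) ^ (2 * s) * (1 + δ) ^ s ≤ ∑ z : Fin s → β × β, traceWeight 𝒜 z := by
  set n : ℝ := (Fintype.card β : ℝ)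
  have hfiber (x : Fin s → β) :
      ((1 + δ) * n) ^ s ≤ ∑ y : Fin s → β, traceWeight 𝒜 fun i => (x i, y i) := by
    obtain ⟨A, hA, hxA⟩ := hmiss x
    calc ((1 + δ) * n) ^ s ≤ (n + #A) ^ s := by
          gcongr
          linarith [hlarge A hA]
      _ = ∑ y : Fin s → β, ∏ i, missWeight A (x i, y i) :=
          (sum_prod_missWeight_of_forall_notMem hxA).symm
      _ ≤ ∑ y : Fin s → β, traceWeight 𝒜 fun i => (x i, y i) :=
          sum_le_sum fun y _ => prod_missWeight_le_traceWeight hA fun i => (x i, y i)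
  calc n ^ (2 * s) * (1 + δ) ^ s = ∑ _x : Fin s → β, ((1 + δ) * n) ^ s := by
        simp only [sum_const, card_univ, Fintype.card_fun, Fintype.card_fin, nsmul_eq_mul, n]
        push_cast
        rw [mul_pow]
        ring
    _ ≤ ∑ x : Fin s → β, ∑ y : Fin s → β, traceWeight 𝒜 fun i => (x i, y i) :=
        sum_le_sum fun x _ => hfiber x
    _ = ∑ z : Fin s → β × β, traceWeight 𝒜 z := by
        rw [← Fintype.sum_prod_type']
        exact (Equiv.sum_comp (Equiv.arrowProdEquivProdArrow (Fin s) (fun _ => β) fun _ => β)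
          fun p => traceWeight 𝒜 fun i => (p.1 i, p.2 i)).symm

theorem exists_net_of_card_image_inter_le [Fintype β] {𝒜 : Finset (Finset β)} {δ T : ℝ}
    (hδ : 0 ≤ δ) (hlarge : ∀ A ∈ 𝒜, δ * Fintype.card β < #A)
    (hT : ∀ S : Finset β, #S ≤ 2 * s → (#(𝒜.image (· ∩ S)) : ℝ) ≤ T) (hlt : T < (1 + δ) ^ s) :
    ∃ N : Finset β, #N ≤ s ∧ ∀ A ∈ 𝒜, ∃ b ∈ N, b ∈ A := by
  by_contra! hmiss
  have hmiss_tuple (x : Fin s → β) : ∃ A ∈ 𝒜, ∀ i, x i ∉ A := by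
    simpa using hmiss (univ.image x) (card_image_le.trans_eq (by simp))
  have hcard : 0 < (Fintype.card β : ℝ) := by
    obtain ⟨A, hA, -⟩ := hmiss ∅ (by simp)
    have hApos : (0 : ℝ) < #A := (by positivity : 0 ≤ δ * Fintype.card β).trans_lt (hlarge A hA)
    exact hApos.trans_le (mod_cast card_le_univ A)
  refine hlt.not_ge (le_of_mul_le_mul_left ?_ (pow_pos hcard (2 * s)))
  exact (le_sum_traceWeight hδ (fun A hA => (hlarge A hA).le) hmiss_tuple).trans
    (sum_traceWeight_le hT)

end DoubleSampling

section NetSize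

theorem exp_half_le_one_add {δ : ℝ} (hδ₀ : 0 ≤ δ) (hδ₂ : δ ≤ 2) :
    Real.exp (δ / 2) ≤ 1 + δ := by
  rw [← Real.le_log_iff_exp_le (by positivity)]
  refine le_trans ?_ (Real.le_log_one_add_of_nonneg hδ₀)
  rw [div_le_div_iff₀ two_pos (by positivity)]
  nlinarith

/- The left side is the bound of `card_image_inter_le_of_vcDim_le` for `2 * r * s` points with
`l = δ / (8 * r)`: then `(1 + l) ^ (2 * r * s) ≤ exp (δ * s / 4)`, half the exponent of
`exp (δ / 2) ^ s ≤ (1 + δ) ^ s`. -/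
theorem pow_mul_one_add_pow_lt {d r s : ℕ} (hr : 0 < r) {δ : ℝ} (hδ₀ : 0 < δ) (hδ₂ : δ ≤ 2)
    (hs : 4 * d * Real.log (8 * r / δ) < δ * s) :
    (8 * r / δ) ^ d * (1 + δ / (8 * r)) ^ (2 * r * s) < (1 + δ) ^ s := by
  have : (0 : ℝ) < r := mod_cast hr
  have hfirst : (8 * r / δ) ^ d = Real.exp (d * Real.log (8 * r / δ)) := by
    rw [Real.exp_nat_mul, Real.exp_log (by positivity)]
  have hsecond : (1 + δ / (8 * r)) ^ (2 * r * s) ≤ Real.exp (δ * s / 4) := by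
    calc (1 + δ / (8 * r)) ^ (2 * r * s) ≤ Real.exp (δ / (8 * r)) ^ (2 * r * s) := by
          gcongr
          linarith [Real.add_one_le_exp (δ / (8 * r))]
      _ = Real.exp (δ * s / 4) := by
          rw [← Real.exp_nat_mul]
          congr 1
          push_cast
          field_simp
          ring
  calc (8 * r / δ) ^ d * (1 + δ / (8 * r)) ^ (2 * r * s)
      ≤ Real.exp (d * Real.log (8 * r / δ)) * Real.exp (δ * s / 4) := by rw [hfirst]; gcongr
    _ = Real.exp (d * Real.log (8 * r / δ) + δ * s / 4) := (Real.exp_add _ _).symm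
    _ < Real.exp (s * (δ / 2)) := Real.exp_lt_exp.2 (by linarith)
    _ = Real.exp (δ / 2) ^ s := Real.exp_nat_mul _ _
    _ ≤ (1 + δ) ^ s := by gcongr; exact exp_half_le_one_add hδ₀.le hδ₂

theorem one_le_logb_two_one_div {ε : ℝ} (hε₀ : 0 < ε) (hε : ε ≤ 1 / 2) :
    1 ≤ Real.logb 2 (1 / ε) := by
  rw [Real.le_logb_iff_rpow_le one_lt_two (by positivity), Real.rpow_one, le_div_iff₀ hε₀]
  linarith

theorem log_fortyEight_div_sq_le {ε : ℝ} (hε₀ : 0 < ε) (hε : ε ≤ 1 / 2) :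
    Real.log (48 / ε ^ 2) ≤ 6 * Real.logb 2 (1 / ε) := by
  have hlogb := one_le_logb_two_one_div hε₀ hε
  calc Real.log (48 / ε ^ 2) ≤ Real.log (2 ^ 6 * (1 / ε) ^ 2) := by
        rw [one_div_pow, mul_one_div]; gcongr; norm_num
    _ = (6 + 2 * Real.logb 2 (1 / ε)) * Real.log 2 := by
        rw [Real.log_mul (by positivity) (by positivity), Real.log_pow, Real.log_pow, Real.logb]
        field_simp
        push_cast
        ring
    _ ≤ 8 * Real.logb 2 (1 / ε) * (3 / 4) := by
        gcongr
        · linarith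
        · linarith [Real.log_two_lt_d9]
    _ = 6 * Real.logb 2 (1 / ε) := by ring

theorem exists_netSize {d : ℕ} (hd : 1 ≤ d) {ε : ℝ} (hε₀ : 0 < ε) (hε : ε ≤ 1 / 2) :
    ∃ s : ℕ, 0 < s ∧ 12 * d * Real.log (48 / ε ^ 2) < ε ^ 2 * s ∧
      ε ^ 2 * s ≤ 73 * (d * Real.logb 2 (1 / ε)) := by
  set L := Real.logb 2 (1 / ε)
  have hd' : (1 : ℝ) ≤ d := mod_cast hd
  have hL : 1 ≤ L := one_le_logb_two_one_div hε₀ hε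
  have hdL : ε ^ 2 ≤ d * L := by
    calc ε ^ 2 ≤ 1 * 1 := by nlinarith
      _ ≤ d * L := by gcongr
  refine ⟨⌊72 * (d * L) / ε ^ 2⌋₊ + 1, Nat.succ_pos _, ?_, ?_⟩ <;> rw [Nat.cast_succ]
  · calc 12 * d * Real.log (48 / ε ^ 2) ≤ 12 * d * (6 * L) := by
          gcongr; exact log_fortyEight_div_sq_le hε₀ hε
      _ = ε ^ 2 * (72 * (d * L) / ε ^ 2) := by field_simp; ring
      _ < ε ^ 2 * (⌊72 * (d * L) / ε ^ 2⌋₊ + 1) := by gcongr; exact Nat.lt_floor_add_one _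
  · calc ε ^ 2 * (⌊72 * (d * L) / ε ^ 2⌋₊ + 1) ≤ ε ^ 2 * (72 * (d * L) / ε ^ 2 + 1) := by
          gcongr; exact Nat.floor_le (by positivity)
      _ = 72 * (d * L) + ε ^ 2 := by field_simp
      _ ≤ 73 * (d * L) := by linarith

end NetSize

section PairNet

open Finset

variable {V β : Type*} [DecidableEq V]

theorem card_image_inter_filter_subset_le [Fintype β] [DecidableEq β] (b : β → Finset V)
    (E : Finset (Finset V)) (S : Finset β) :
    #((E.image fun e => ({i | b i ⊆ e} : Finset β)).image (· ∩ S)) ≤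
      #(E.image (· ∩ S.biUnion b)) := by
  have hfactor : (E.image fun e => ({i | b i ⊆ e} : Finset β)).image (· ∩ S) =
      (E.image (· ∩ S.biUnion b)).image fun U => {i ∈ S | b i ⊆ U} := by
    simp only [image_image]
    refine image_congr fun e _ => ?_
    ext i
    simp only [Function.comp_apply, mem_inter, mem_filter, mem_univ, true_and, subset_inter_iff,
      and_comm (a := i ∈ S)]
    exact and_congr_left fun hi => (and_iff_left (subset_biUnion_of_mem b hi)).symm
  exact hfactor ▸ card_image_le

theorem exists_indexNet [Fintype β] {b : β → Finset V} {E : Finset (Finset V)}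
    {d r s : ℕ} {δ : ℝ} (hE : E.vcDim ≤ d) (hr : 0 < r) (hb : ∀ i, #(b i) ≤ r)
    (hδ₀ : 0 < δ) (hδ₂ : δ ≤ 2) (hlarge : ∀ e ∈ E, δ * Fintype.card β < #{i | b i ⊆ e})
    (hs : 4 * d * Real.log (8 * r / δ) < δ * s) :
    ∃ N : Finset β, #N ≤ s ∧ ∀ e ∈ E, ∃ i ∈ N, b i ⊆ e := by
  classical
  have htrace (S : Finset β) (hS : #S ≤ 2 * s) :
      (#((E.image fun e => ({i | b i ⊆ e} : Finset β)).image (· ∩ S)) : ℝ) ≤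
        (8 * r / δ) ^ d * (1 + δ / (8 * r)) ^ (2 * r * s) := by
    have hU : #(S.biUnion b) ≤ 2 * r * s := by
      calc #(S.biUnion b) ≤ #S * r := card_biUnion_le_card_mul _ _ _ fun i _ => hb i
        _ ≤ 2 * s * r := by gcongr
        _ = 2 * r * s := by ring
    have hr' : (1 : ℝ) ≤ r := mod_cast hr
    calc (#((E.image fun e => ({i | b i ⊆ e} : Finset β)).image (· ∩ S)) : ℝ)
        ≤ #(E.image (· ∩ S.biUnion b)) := mod_cast card_image_inter_filter_subset_le b E S
      _ ≤ (δ / (8 * r))⁻¹ ^ d * (1 + δ / (8 * r)) ^ #(S.biUnion b) :=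
          card_image_inter_le_of_vcDim_le hE (by positivity)
            (div_le_one_of_le₀ (by linarith) (by positivity)) _
      _ ≤ (8 * r / δ) ^ d * (1 + δ / (8 * r)) ^ (2 * r * s) := by
          rw [inv_div]
          gcongr
          exact le_add_of_nonneg_right (by positivity)
  obtain ⟨N, hN, hNE⟩ := exists_net_of_card_image_inter_le hδ₀.le
    (forall_mem_image.2 hlarge) htrace (pow_mul_one_add_pow_lt hr hδ₀ hδ₂ hs)
  exact ⟨N, hN, fun e he => by simpa using hNE _ (mem_image_of_mem _ he)⟩

theorem exists_blockNet {E ℬ : Finset (Finset V)} {d r s : ℕ} {δ : ℝ} (hE : E.vcDim ≤ d)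
    (hr : 0 < r) (hℬ : ∀ b ∈ ℬ, #b ≤ r) (hδ₀ : 0 < δ) (hδ₂ : δ ≤ 2)
    (hlarge : ∀ e ∈ E, δ * #ℬ < #{b ∈ ℬ | b ⊆ e})
    (hs : 4 * d * Real.log (8 * r / δ) < δ * s) :
    ∃ N ⊆ ℬ, #N ≤ s ∧ ∀ e ∈ E, ∃ b ∈ N, b ⊆ e := by
  have hlarge' (e) (he : e ∈ E) : δ * Fintype.card ℬ < #{b : ℬ | b.1 ⊆ e} := by
    rw [Fintype.card_coe, card_filter, sum_coe_sort ℬ fun b => if b ⊆ e then 1 else 0,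
      ← card_filter]
    exact hlarge e he
  obtain ⟨N, hN, hNE⟩ := exists_indexNet hE hr (fun b : ℬ => hℬ b b.2) hδ₀ hδ₂ hlarge' hs
  refine ⟨N.map (Function.Embedding.subtype _), ?_, by simpa using hN, fun e he => ?_⟩
  · simp +contextual [subset_iff]
  · obtain ⟨b, hbN, hbe⟩ := hNE e he
    exact ⟨b, mem_map_of_mem _ hbN, hbe⟩

/-- `N` is a pair net for the hypergraph `E`: every hyperedge contains a two-element member of `N`.
A color can be given to each of a family of disjoint pair nets. -/
def IsPairNet (E N : Finset (Finset V)) : Prop :=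
  ∀ e ∈ E, ∃ p ∈ N, p ⊆ e ∧ #p = 2

theorem choose_two_card_sub_card_le [Fintype V] (e : Finset V) (A : Finset (Finset V)) :
    ((#e).choose 2 : ℝ) - #A ≤ #{p ∈ powersetCard 2 univ \ A | p ⊆ e} := by
  have hfilter : powersetCard 2 e \ A ⊆ {p ∈ powersetCard 2 univ \ A | p ⊆ e} := fun p hp => by
    simp_all [mem_powersetCard]
  have hcard := (le_card_sdiff A (powersetCard 2 e)).trans (card_le_card hfilter)
  rw [card_powersetCard, tsub_le_iff_right] at hcard
  rw [sub_le_iff_le_add]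
  exact mod_cast hcard

theorem sq_div_three_le_choose_two {m : ℕ} (hm : 3 ≤ m) : (m : ℝ) ^ 2 / 3 ≤ m.choose 2 := by
  have hm' : (3 : ℝ) ≤ m := mod_cast hm
  rw [Nat.cast_choose_two]
  nlinarith

theorem choose_two_lt_sq_div_two {m : ℕ} (hm : 0 < m) : (m.choose 2 : ℝ) < (m : ℝ) ^ 2 / 2 := by
  have hm' : (0 : ℝ) < m := mod_cast hm
  rw [Nat.cast_choose_two]
  nlinarith

theorem exists_isPairNet_disjoint [Fintype V] {E : Finset (Finset V)} {d s : ℕ} {ε : ℝ}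
    (hE : E.vcDim ≤ d) (hε : ε ≤ 1) (hn : 2 < ε * Fintype.card V)
    (hlarge : ∀ e ∈ E, ε * Fintype.card V ≤ #e)
    (hs : 12 * d * Real.log (48 / ε ^ 2) < ε ^ 2 * s)
    {A : Finset (Finset V)} (hA : #A ≤ (ε * Fintype.card V) ^ 2 / 6) :
    ∃ N : Finset (Finset V), Disjoint A N ∧ #N ≤ s ∧ IsPairNet E N := by
  set n := Fintype.card V
  have hnpos : 0 < n := Nat.pos_of_ne_zero fun h => by norm_num [h] at hn
  have hεpos : 0 < ε := pos_of_mul_pos_left (two_pos.trans hn) n.cast_nonneg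
  have hpairs : (#(powersetCard 2 (univ : Finset V) \ A) : ℝ) < (n : ℝ) ^ 2 / 2 := by
    refine lt_of_le_of_lt ?_ (choose_two_lt_sq_div_two hnpos)
    exact mod_cast (card_le_card sdiff_subset).trans_eq (card_powersetCard 2 univ)
  have hdense (e) (he : e ∈ E) : ε ^ 2 / 3 * #(powersetCard 2 univ \ A) <
      #{p ∈ powersetCard 2 univ \ A | p ⊆ e} := by
    have hthree : 3 ≤ #e := by
      exact_mod_cast hn.trans_le (hlarge e he)
    calc ε ^ 2 / 3 * #(powersetCard 2 univ \ A) < ε ^ 2 / 3 * ((n : ℝ) ^ 2 / 2) := by gcongr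
      _ = (ε * n) ^ 2 / 3 - (ε * n) ^ 2 / 6 := by ring
      _ ≤ (#e : ℝ) ^ 2 / 3 - #A := by gcongr; exact hlarge e he
      _ ≤ (#e).choose 2 - #A := by gcongr; exact sq_div_three_le_choose_two hthree
      _ ≤ #{p ∈ powersetCard 2 univ \ A | p ⊆ e} := choose_two_card_sub_card_le e A
  obtain ⟨N, hNsub, hN, hNE⟩ := exists_blockNet (r := 2) hE two_pos
    (fun p hp => (mem_powersetCard.1 (sdiff_subset hp)).2.le) (by positivity)
    (by nlinarith : ε ^ 2 / 3 ≤ 2) hdense (s := s) (by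
      have hscale : 8 * ((2 : ℕ) : ℝ) / (ε ^ 2 / 3) = 48 / ε ^ 2 := by field_simp; norm_num
      rw [hscale]
      linarith)
  refine ⟨N, disjoint_sdiff.mono_right hNsub, hN, fun e he => ?_⟩
  obtain ⟨p, hpN, hpe⟩ := hNE e he
  exact ⟨p, hpN, hpe, (mem_powersetCard.1 (sdiff_subset (hNsub hpN))).2⟩

end PairNet

section Coloring

open Finset

variable {V α : Type*}

theorem exists_pairwise_disjoint_of_forall_avoiding {P : Finset α → Prop} {s k : ℕ}
    (h : ∀ A : Finset α, #A ≤ k * s → ∃ N, Disjoint A N ∧ #N ≤ s ∧ P N) :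
    ∃ N : Fin (k + 1) → Finset α, Pairwise (Function.onFun Disjoint N) ∧
      ∀ i, #(N i) ≤ s ∧ P (N i) := by
  classical
  induction k with
  | zero =>
    obtain ⟨N, -, hN⟩ := h ∅ (by simp)
    exact ⟨fun _ => N, fun i j hij => (hij (Fin.ext (by lia))).elim, fun _ => hN⟩
  | succ k ih =>
    obtain ⟨N, hdisj, hN⟩ := ih fun A hA => h A (hA.trans (by gcongr; exact k.le_succ))
    obtain ⟨M, hM, hMs⟩ := h (univ.biUnion N)
      ((card_biUnion_le_card_mul _ _ s fun i _ => (hN i).1).trans_eq (by simp))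
    rw [disjoint_biUnion_left] at hM
    refine ⟨Fin.cons M N, fun i j hij => ?_, Fin.cases hMs hN⟩
    cases i using Fin.cases <;> cases j using Fin.cases
    · exact (hij rfl).elim
    · exact (hM _ (mem_univ _)).symm
    · exact hM _ (mem_univ _)
    · exact hdisj fun h => hij (congrArg Fin.succ h)

theorem exists_coloring_of_pairwise_disjoint {ι : Type*} [Nonempty ι] {N : ι → Finset α}
    (hN : Pairwise (Function.onFun Disjoint N)) : ∃ χ : α → ι, ∀ i, ∀ p ∈ N i, χ p = i :=
  ⟨fun p => Classical.epsilon fun i => p ∈ N i, fun i p hp => by_contra fun hne =>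
    disjoint_left.1 (hN hne) (Classical.epsilon_spec (p := fun i => p ∈ N i) ⟨i, hp⟩) hp⟩

theorem rainbow_pair_coloring_general [Fintype V] [DecidableEq V] {E : Finset (Finset V)} {d : ℕ}
    (hE : E.vcDim ≤ d) (hd : 1 ≤ d) {ε : ℝ} (hn : 2 < ε * Fintype.card V) (hε : ε ≤ 1 / 2) :
    ∃ k : ℕ, 0 < k ∧
      1 / 438 * (Fintype.card V : ℝ) ^ 2 * ε ^ 4 / (d * Real.logb 2 (1 / ε)) ≤ k ∧
      ∃ χ : Finset V → Fin k, ∀ e ∈ E, ε * Fintype.card V ≤ #e →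
        ∀ col : Fin k, ∃ p ⊆ e, #p = 2 ∧ χ p = col := by
  set n : ℝ := (Fintype.card V : ℝ)
  have hε₀ : 0 < ε := pos_of_mul_pos_left (two_pos.trans hn) (Nat.cast_nonneg _)
  obtain ⟨s, hs₀, hs, hsL⟩ := exists_netSize hd hε₀ hε
  have hs₀' : (0 : ℝ) < s := mod_cast hs₀
  set k := ⌊(ε * n) ^ 2 / 6 / s⌋₊
  have hused (A : Finset (Finset V)) (hA : #A ≤ k * s) : (#A : ℝ) ≤ (ε * n) ^ 2 / 6 := by
    calc (#A : ℝ) ≤ k * s := mod_cast hA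
      _ ≤ (ε * n) ^ 2 / 6 := (le_div_iff₀ hs₀').1 (Nat.floor_le (by positivity))
  obtain ⟨N, hdisj, hN⟩ := exists_pairwise_disjoint_of_forall_avoiding (k := k) fun A hA =>
    exists_isPairNet_disjoint ((vcDim_mono (filter_subset _ E)).trans hE) (by linarith) hn
      (fun e he => (mem_filter.1 he).2) hs (hused A hA)
  obtain ⟨χ, hχ⟩ := exists_coloring_of_pairwise_disjoint hdisj
  refine ⟨k + 1, k.succ_pos, ?_, χ, fun e he hlarge col => ?_⟩
  · have hL := one_le_logb_two_one_div hε₀ hε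
    calc 1 / 438 * n ^ 2 * ε ^ 4 / (d * Real.logb 2 (1 / ε))
        ≤ (ε * n) ^ 2 / 6 / s := by
          rw [div_le_div_iff₀ (by positivity) hs₀']
          calc 1 / 438 * n ^ 2 * ε ^ 4 * s = (ε * n) ^ 2 / 438 * (ε ^ 2 * s) := by ring
            _ ≤ (ε * n) ^ 2 / 438 * (73 * (d * Real.logb 2 (1 / ε))) := by gcongr
            _ = (ε * n) ^ 2 / 6 * (d * Real.logb 2 (1 / ε)) := by ring
      _ ≤ ((k + 1 : ℕ) : ℝ) := by
          rw [Nat.cast_succ]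
          exact (Nat.lt_floor_add_one _).le
  · obtain ⟨p, hpN, hpe, hp⟩ := (hN col).2 e (mem_filter.2 ⟨he, hlarge⟩)
    exact ⟨p, hpe, hp, hχ col p hpN⟩

end Coloring

theorem rainbow_pair_coloring :
    ∃ c : ℝ, 0 < c ∧
      ∀ (V : Type) (_ : Fintype V) (_ : DecidableEq V) (E : Finset (Finset V)) (d : ℕ),
        IsVCDim E d → 1 ≤ d →
        ∀ ε : ℝ, 2 / (Fintype.card V : ℝ) < ε → ε ≤ 1 / 2 →
          ∃ k : ℕ, 0 < k ∧
            c * (Fintype.card V : ℝ) ^ 2 * ε ^ 4 / ((d : ℝ) * Real.logb 2 (1 / ε)) ≤ (k : ℝ) ∧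
            ∃ χ : Finset V → Fin k,
              ∀ e ∈ E, ε * (Fintype.card V : ℝ) ≤ (e.card : ℝ) →
                ∀ col : Fin k, ∃ p ⊆ e, p.card = 2 ∧ χ p = col := by
  refine ⟨1 / 438, by norm_num, fun V _ _ E d hVC hd ε hε hε' => ?_⟩
  have hV : (0 : ℝ) < Fintype.card V := by
    obtain ⟨⟨A, -, rfl⟩, -⟩ := hVC
    exact mod_cast hd.trans A.card_le_univ
  exact rainbow_pair_coloring_general hVC.vcDim_eq.le hd ((div_lt_iff₀ hV).1 hε) hε'
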